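/- Let π be a Lipschitz integer with N(π) = p an odd rational prime, and let n ≥ 1 and 1 ≤ k ≤ n. If C is an additive subgroup of H(ℤ)_π^n of cardinality (p²)^k (an (n,k) linear code) that corrects all errors of Lipschitz weight 1 or less, then (p²)^{n−k} ≥ 8n + 1. -/

import Mathlib

open Quaternion

/-- The set `{δ * π : δ ∈ H(ℤ)}`, as an additive subgroup of the Lipschitz
integers `ℍ[ℤ]`.  Two Lipschitz integers are right congruent modulo `π` iff
their difference lies in this subgroup. -/
def lipMultiples (π : ℍ[ℤ]) : AddSubgroup ℍ[ℤ] where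
  carrier := Set.range (fun δ => δ * π)
  zero_mem' := ⟨0, zero_mul π⟩
  add_mem' := by rintro _ _ ⟨a, rfl⟩ ⟨b, rfl⟩; exact ⟨a + b, add_mul a b π⟩
  neg_mem' := by rintro _ ⟨a, rfl⟩; exact ⟨-a, neg_mul a π⟩

/-- `H(ℤ)_π`: the Lipschitz integers modulo right congruence modulo `π`. -/
abbrev LipMod (π : ℍ[ℤ]) := ℍ[ℤ] ⧸ lipMultiples π

/-- The Lipschitz weight of a class `x ∈ H(ℤ)_π`: the least value of
`|a₀| + |a₁| + |a₂| + |a₃|` over all representatives `a₀ + a₁e₁ + a₂e₂ + a₃e₃` of `x`. -/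
noncomputable def lipWt (π : ℍ[ℤ]) (x : LipMod π) : ℕ :=
  sInf {m | ∃ q : ℍ[ℤ], (QuotientAddGroup.mk q : LipMod π) = x ∧
    m = q.re.natAbs + q.imI.natAbs + q.imJ.natAbs + q.imK.natAbs}

/-- The Lipschitz weight of a vector over `H(ℤ)_π` is the sum of the Lipschitz
weights of its components. -/
noncomputable def lipWtVec (π : ℍ[ℤ]) {n : ℕ} (v : Fin n → LipMod π) : ℕ :=
  ∑ i, lipWt π (v i)

/-- A code `C ⊆ H(ℤ)_π^n` corrects all errors of Lipschitz weight `t` or less: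
any two distinct vectors of Lipschitz weight at most `t` lie in distinct cosets of `C`. -/
def CorrectsLip (π : ℍ[ℤ]) {n : ℕ} (C : AddSubgroup (Fin n → LipMod π)) (t : ℕ) : Prop :=
  ∀ u v : Fin n → LipMod π, lipWtVec π u ≤ t → lipWtVec π v ≤ t → u - v ∈ C → u = v

/-!
Distinct vectors of weight at most `t` lie in distinct cosets of `C`, so the ball of radius `t`
has at most `|H(ℤ)_π^n| / |C|` elements. Right multiplication by `π` has determinant `N(π)²` on
`ℤ⁴`, whence `|H(ℤ)_π| = N(π)²`. The ball of radius one contains `0` and the `8n` vectors whose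
only nonzero component is the class of one of the eight units. These are pairwise distinct
because congruent integers differ by a multiple of `π`, whose norm is divisible by `N(π) ∤ 4`,
whereas a unit has norm `1` and two distinct units have a difference of norm `2` or `4`.
-/

section General

lemma card_quotient_range_eq_natAbs_det {M : Type*} [AddCommGroup M] [Module.Free ℤ M]
    [Module.Finite ℤ M] (f : M →ₗ[ℤ] M) (hf : Function.Injective f) :
    Nat.card (M ⧸ f.range) = f.det.natAbs :=
  (Submodule.natAbs_det_equiv f.range (LinearEquiv.ofInjective f hf)).symm

lemma card_mul_card_addSubgroup_le {G ι : Type*} [AddGroup G] [Finite G] {C : AddSubgroup G}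
    {e : ι → G} (he : Function.Injective fun i => (e i : G ⧸ C)) :
    Nat.card ι * Nat.card C ≤ Nat.card G := by
  rw [AddSubgroup.card_eq_card_quotient_mul_card_addSubgroup C]
  exact Nat.mul_le_mul_right _ (Nat.card_le_card_of_injective _ he)

lemma injective_option_elim_single {ι α M : Type*} [DecidableEq ι] [Zero M] {f : α → M}
    (hf : Function.Injective f) (hf₀ : ∀ a, f a ≠ 0) :
    Function.Injective fun x : Option (ι × α) =>
      x.elim (0 : ι → M) fun y => Pi.single y.1 (f y.2) := by
  rintro (_ | ⟨i, a⟩) (_ | ⟨j, b⟩) h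
  · rfl
  · exact absurd (Pi.single_eq_zero_iff.1 h.symm) (hf₀ b)
  · exact absurd (Pi.single_eq_zero_iff.1 h) (hf₀ a)
  · obtain rfl : i = j := by
      by_contra hij
      have hi := congrFun h i
      simp only [Option.elim_some, Pi.single_eq_same, Pi.single_eq_of_ne hij] at hi
      exact hf₀ a hi
    obtain rfl : a = b := hf (Pi.single_injective i h)
    rfl

/-- The basis `1, e₁, e₂, e₃` of the Hamilton quaternions: `QuaternionAlgebra.basisOneIJK`
restated for `ℍ[R]`, on which the norm and the multiplication formulas of `Quaternion` apply. -/
noncomputable def quaternionBasis (R : Type*) [CommRing R] : Module.Basis (Fin 4) R ℍ[R] :=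
  QuaternionAlgebra.basisOneIJK (-1) 0 (-1)

lemma coe_quaternionBasis (R : Type*) [CommRing R] :
    ⇑(quaternionBasis R) = ![⟨1, 0, 0, 0⟩, ⟨0, 1, 0, 0⟩, ⟨0, 0, 1, 0⟩, ⟨0, 0, 0, 1⟩] := by
  refine (Module.Basis.coe_ofEquivFun _).trans ?_
  ext j <;> fin_cases j <;> rfl

lemma coe_quaternionBasis_repr {R : Type*} [CommRing R] (q : ℍ[R]) :
    ⇑((quaternionBasis R).repr q) = ![q.re, q.imI, q.imJ, q.imK] :=
  rfl

lemma toMatrix_mulRight_quaternionBasis {R : Type*} [CommRing R] (q : ℍ[R]) :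
    LinearMap.toMatrix (quaternionBasis R) (quaternionBasis R) (LinearMap.mulRight R q) =
      !![q.re, -q.imI, -q.imJ, -q.imK;
         q.imI, q.re, q.imK, -q.imJ;
         q.imJ, -q.imK, q.re, q.imI;
         q.imK, q.imJ, -q.imI, q.re] := by
  ext i j
  rw [LinearMap.toMatrix_apply, LinearMap.mulRight_apply, coe_quaternionBasis_repr,
    coe_quaternionBasis, re_mul, imI_mul, imJ_mul, imK_mul]
  fin_cases i <;> fin_cases j <;> simp

lemma det_mulRight_quaternion {R : Type*} [CommRing R] (q : ℍ[R]) :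
    LinearMap.det (LinearMap.mulRight R q) = normSq q ^ 2 := by
  rw [← LinearMap.det_toMatrix (quaternionBasis R), toMatrix_mulRight_quaternionBasis,
    normSq_def', Matrix.det_succ_row_zero]
  simp only [Fin.sum_univ_four, Matrix.det_fin_three, Matrix.submatrix_apply, Matrix.of_apply,
    Matrix.cons_val, Fin.succAbove, Fin.reduceSucc, Fin.reduceCastSucc, Fin.reduceLT,
    Fin.coe_ofNat_eq_mod, reduceIte]
  ring

instance {R : Type*} [Zero R] [One R] [Neg R] [DecidableEq R] : DecidableEq ℍ[R] :=
  fun _ _ => decidable_of_iff _ QuaternionAlgebra.ext_iff.symm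

end General

section ResidueClasses

variable {π : ℍ[ℤ]}

lemma card_lipMod (hπ : π ≠ 0) : Nat.card (LipMod π) = (normSq π).natAbs ^ 2 := by
  have hcard := card_quotient_range_eq_natAbs_det (LinearMap.mulRight ℤ π)
    (mul_left_injective₀ hπ)
  rw [det_mulRight_quaternion, Int.natAbs_pow] at hcard
  exact hcard

lemma finite_lipMod (hπ : π ≠ 0) : Finite (LipMod π) :=
  Nat.finite_of_card_ne_zero <| by simp [card_lipMod hπ, hπ]

lemma normSq_dvd_of_mem_lipMultiples {q : ℍ[ℤ]} (hq : q ∈ lipMultiples π) :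
    normSq π ∣ normSq q := by
  obtain ⟨δ, rfl⟩ := hq
  exact ⟨normSq δ, by rw [map_mul, mul_comm]⟩

/-- The eight units `±1, ±e₁, ±e₂, ±e₃` of the Lipschitz integers. -/
def lipUnits : Finset ℍ[ℤ] :=
  {⟨1, 0, 0, 0⟩, ⟨-1, 0, 0, 0⟩, ⟨0, 1, 0, 0⟩, ⟨0, -1, 0, 0⟩,
    ⟨0, 0, 1, 0⟩, ⟨0, 0, -1, 0⟩, ⟨0, 0, 0, 1⟩, ⟨0, 0, 0, -1⟩}

lemma card_lipUnits : lipUnits.card = 8 := by decide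

lemma normSq_of_mem_lipUnits : ∀ u ∈ lipUnits, normSq u = 1 := by decide

lemma normSq_sub_dvd_four {u v : ℍ[ℤ]} (hu : normSq u = 1) (hv : normSq v = 1) (huv : u ≠ v) :
    normSq (u - v) ∣ 4 := by
  -- `N(u - v)` is even, and at most `4` because `N(u - v) + N(u + v) = 4`.
  have hsub : normSq (u - v) = 2 + 2 * (u * star (-v)).re := by
    rw [sub_eq_add_neg, normSq_add, normSq_neg, hu, hv]; ring
  have hadd : normSq (u + v) = 2 - 2 * (u * star (-v)).re := by
    rw [normSq_add, hu, hv, star_neg, mul_neg, re_neg]; ring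
  have hpos : 0 < normSq (u - v) :=
    normSq_nonneg.lt_of_ne' (normSq_ne_zero.2 (sub_ne_zero.2 huv))
  have hnonneg : 0 ≤ normSq (u + v) := normSq_nonneg
  obtain h | h : normSq (u - v) = 2 ∨ normSq (u - v) = 4 := by lia
  all_goals norm_num [h]

lemma mk_ne_zero_of_normSq_eq_one (hπ : ¬ normSq π ∣ 4) {u : ℍ[ℤ]} (hu : normSq u = 1) :
    (u : LipMod π) ≠ 0 := fun h =>
  hπ <| ((hu ▸ normSq_dvd_of_mem_lipMultiples ((QuotientAddGroup.eq_zero_iff u).1 h)).trans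
    (one_dvd 4))

lemma injOn_mk_normSq_eq_one (hπ : ¬ normSq π ∣ 4) :
    Set.InjOn (fun u : ℍ[ℤ] => (u : LipMod π)) {u | normSq u = 1} := by
  intro u hu v hv huv
  by_contra hne
  have hmem : u - v ∈ lipMultiples π := QuotientAddGroup.eq_iff_sub_mem.1 huv
  exact hπ ((normSq_dvd_of_mem_lipMultiples hmem).trans (normSq_sub_dvd_four hu hv hne))

end ResidueClasses

section Weight

variable (π : ℍ[ℤ]) {n : ℕ}

lemma lipWt_mk_le (q : ℍ[ℤ]) :
    lipWt π q ≤ q.re.natAbs + q.imI.natAbs + q.imJ.natAbs + q.imK.natAbs :=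
  Nat.sInf_le ⟨q, rfl, rfl⟩

lemma lipWt_zero : lipWt π 0 = 0 :=
  Nat.le_zero.1 (lipWt_mk_le π 0)

lemma lipWt_mk_le_one_of_mem_lipUnits {u : ℍ[ℤ]} (hu : u ∈ lipUnits) : lipWt π u ≤ 1 := by
  have hnorm : ∀ u ∈ lipUnits,
      u.re.natAbs + u.imI.natAbs + u.imJ.natAbs + u.imK.natAbs = 1 := by decide
  exact (lipWt_mk_le π u).trans_eq (hnorm u hu)

lemma lipWtVec_zero : lipWtVec π (0 : Fin n → LipMod π) = 0 := by
  simp [lipWtVec, lipWt_zero]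

lemma lipWtVec_single (i : Fin n) (x : LipMod π) : lipWtVec π (Pi.single i x) = lipWt π x := by
  rw [lipWtVec, Fintype.sum_eq_single i fun j hj => by rw [Pi.single_eq_of_ne hj, lipWt_zero],
    Pi.single_eq_same]

end Weight

section SpherePacking

variable {π : ℍ[ℤ]} {n : ℕ}

theorem CorrectsLip.card_ball_mul_card_le (hπ : π ≠ 0) {t : ℕ}
    {C : AddSubgroup (Fin n → LipMod π)} (hC : CorrectsLip π C t) :
    Nat.card {v : Fin n → LipMod π // lipWtVec π v ≤ t} * Nat.card C ≤
      ((normSq π).natAbs ^ 2) ^ n := by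
  have := finite_lipMod hπ
  have hinj : Function.Injective fun v : {v : Fin n → LipMod π // lipWtVec π v ≤ t} =>
      ((v : Fin n → LipMod π) : (Fin n → LipMod π) ⧸ C) := fun u v huv =>
    Subtype.ext (hC u v u.2 v.2 (QuotientAddGroup.eq_iff_sub_mem.1 huv))
  calc _ ≤ Nat.card (Fin n → LipMod π) := card_mul_card_addSubgroup_le hinj
    _ = ((normSq π).natAbs ^ 2) ^ n := by rw [Nat.card_fun, card_lipMod hπ, Nat.card_fin]

lemma le_card_ball_one (hπ : π ≠ 0) (hπ₄ : ¬ normSq π ∣ 4) :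
    8 * n + 1 ≤ Nat.card {v : Fin n → LipMod π // lipWtVec π v ≤ 1} := by
  have := finite_lipMod hπ
  let e (x : Option (Fin n × lipUnits)) : Fin n → LipMod π :=
    x.elim 0 fun y => Pi.single y.1 (QuotientAddGroup.mk y.2.1)
  have he : Function.Injective e := injective_option_elim_single
    (f := fun u : lipUnits => (QuotientAddGroup.mk u.1 : LipMod π))
    (fun u v huv => Subtype.ext <| injOn_mk_normSq_eq_one hπ₄
      (normSq_of_mem_lipUnits u u.2) (normSq_of_mem_lipUnits v v.2) huv)
    fun u => mk_ne_zero_of_normSq_eq_one hπ₄ (normSq_of_mem_lipUnits u u.2)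
  have hball : ∀ x, lipWtVec π (e x) ≤ 1
    | none => (lipWtVec_zero π).trans_le zero_le_one
    | some (i, u) => (lipWtVec_single π i _).trans_le (lipWt_mk_le_one_of_mem_lipUnits π u.2)
  calc 8 * n + 1 = Nat.card (Option (Fin n × lipUnits)) := by
        simp [card_lipUnits, mul_comm]
    _ ≤ _ := Nat.card_le_card_of_injective (Set.codRestrict e {v | lipWtVec π v ≤ 1} hball)
        (he.codRestrict hball)

theorem sphere_packing_lipschitz_wt_one_general {m : ℕ} (hm : m ≠ 0) (hm₄ : ¬ m ∣ 4)
    (hN : normSq π = (m : ℤ)) {C : AddSubgroup (Fin n → LipMod π)} (hC : CorrectsLip π C 1) :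
    (8 * n + 1) * Nat.card C ≤ (m ^ 2) ^ n := by
  have hπ : π ≠ 0 := normSq_ne_zero.1 (by simpa [hN] using hm)
  have hπ₄ : ¬ normSq π ∣ 4 := by rw [hN]; exact_mod_cast hm₄
  calc (8 * n + 1) * Nat.card C
      ≤ Nat.card {v : Fin n → LipMod π // lipWtVec π v ≤ 1} * Nat.card C :=
        Nat.mul_le_mul_right _ (le_card_ball_one hπ hπ₄)
    _ ≤ ((normSq π).natAbs ^ 2) ^ n := hC.card_ball_mul_card_le hπ
    _ = (m ^ 2) ^ n := by rw [hN, Int.natAbs_natCast]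

end SpherePacking

/-- An `(n, k)` linear code over `H(ℤ)_π` (`N(π) = p` an odd prime) correcting all
errors of Lipschitz weight 1 satisfies `(p²)^(n-k) ≥ 8n + 1`. -/
theorem sphere_packing_lipschitz_wt_one (π : ℍ[ℤ]) (p : ℕ) (hp : p.Prime) (hodd : Odd p)
    (hN : Quaternion.normSq π = (p : ℤ))
    (n k : ℕ) (hn : 1 ≤ n) (hk : 1 ≤ k) (hkn : k ≤ n)
    (C : AddSubgroup (Fin n → LipMod π))
    (hcard : Nat.card C = (p ^ 2) ^ k)
    (hcorr : CorrectsLip π C 1) :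
    8 * n + 1 ≤ (p ^ 2) ^ (n - k) := by
  have hp₄ : ¬ p ∣ 4 := fun h =>
    hp.ne_one ((hodd.coprime_two_right.pow_right 2).eq_one_of_dvd h)
  have hbound := sphere_packing_lipschitz_wt_one_general hp.ne_zero hp₄ hN hcorr
  rw [hcard, ← pow_sub_mul_pow _ hkn] at hbound
  exact Nat.le_of_mul_le_mul_right hbound (pow_pos (pow_pos hp.pos 2) k)
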